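/- Let f : (0,1) → (0,1) be the function f(ε') = (ε'/16)⁸. For every ε₀ > 0 there exist δ > 0 and an integer n₀ such that for all integers l and n with n ≥ n₀ and 0 ≤ l ≤ δn, the hypergraph H_n^l is (1/2, f, ε₀)-dense; that is, for every ε ≥ ε₀ and every subset U of E(K_n) with |U| ≥ (1/2 + ε)·|E(K_n)|, the number of l-shortcuts all four of whose edges lie in U is at least f(ε) times the total number of l-shortcuts in K_n. -/

import Mathlib

/-!
Write `d` for the degree in the graph `G` with edge set `U`. A quadruple gives a shortcut in `G` as
soon as `i₃ ∈ N(i₁)`, `i₃ + 1 ∈ N(i₂ + 1)`, `i₄ ∈ N(i₁ + 1)`, `i₄ + l + 1 ∈ N(i₂)` and the vertices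
`i₃, i₃ + 1` and `i₄, i₄ + l + 1` lie on the clockwise arc from `i₂` to `i₁`, away from its ends and
without interleaving. If `i₂` comes shortly after `i₁`, this arc is almost the whole circle, so by
inclusion–exclusion there are at least `ε² n² / 16` choices of `(i₃, i₄)` whenever both
`d(i₁) + d(i₂ + 1)` and `d(i₁ + 1) + d(i₂)` are at least `(1 + 3 ε / 4) n`.

Such pairs `(i₁, i₂)` come from the pigeonhole principle. By averaging, about `ε n` vertices satisfy
`d(i) + d(i + 1) ≥ (1 + ε) n`. Sort them by position, into intervals of length `ε n / 4`, and by the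
value of `d(i) - d(i + 1)`, up to `ε n / 2`. One of the at most `25 / ε²` cells contains a
proportion `ε² / 25` of these vertices. For `i₁, i₂` in one cell,
`2 (d(i₁) + d(i₂ + 1)) = (d(i₁) + d(i₁ + 1)) + (d(i₂) + d(i₂ + 1)) + (d(i₁) - d(i₁ + 1)) -
(d(i₂) - d(i₂ + 1)) ≥ (2 + 3 ε / 2) n`, and likewise for the other sum. This gives at least
`ε⁸ n⁴ / 2²⁰` quadruples. Each edge set comes from at most `8⁴ = 2¹²` of them, while there are at
most `n⁴` shortcuts in total, which yields the factor `ε⁸ / 2³² = (ε / 16)⁸`.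
-/

open Filter Topology Classical

/-- The clockwise arc length from `a` to `b` on the discrete circle `ZMod n`. -/
def arcDist {n : ℕ} (a b : ZMod n) : ℕ := (b - a).val

/-- The points of `L` are all distinct and lie in this clockwise cyclic order
on the discrete circle `ZMod n` (the consecutive clockwise arcs, including the
wrap-around arc, sum to exactly `n`). -/
def InClockwiseOrder {n : ℕ} (L : List (ZMod n)) : Prop :=
  L.Nodup ∧ ((L.zip (L.rotate 1)).map fun q => arcDist q.1 q.2).sum = n

/-- The Hamilton cycle `C_n` on vertex set `ZMod n`, with edges `{i, i+1}`. -/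
def cycleGraph (n : ℕ) : SimpleGraph (ZMod n) :=
  SimpleGraph.fromEdgeSet {e | ∃ i : ZMod n, e = s(i, i + 1)}

/-- The four edges of the `l`-shortcut determined by `i₁ i₂ i₃ i₄`. -/
def shortcutEdges {n : ℕ} (l : ℕ) (i₁ i₂ i₃ i₄ : ZMod n) : Finset (Sym2 (ZMod n)) :=
  {s(i₁, i₃), s(i₁ + 1, i₄), s(i₂, i₄ + (l : ZMod n) + 1), s(i₂ + 1, i₃ + 1)}

/-- `(i₁, i₂, i₃, i₄)` determines an `l`-shortcut (of type (i) or type (ii)) in `K_n ∖ C_n`. -/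
def IsShortcutTuple {n : ℕ} (l : ℕ) (i₁ i₂ i₃ i₄ : ZMod n) : Prop :=
  (InClockwiseOrder [i₁, i₁ + 1, i₂, i₂ + 1, i₃, i₃ + 1, i₄, i₄ + (l : ZMod n) + 1] ∨
   InClockwiseOrder [i₁, i₁ + 1, i₂, i₂ + 1, i₄, i₄ + (l : ZMod n) + 1, i₃, i₃ + 1]) ∧
  ∀ e ∈ shortcutEdges l i₁ i₂ i₃ i₄, e ∉ (cycleGraph n).edgeSet

/-- The edge set `S` is an `l`-shortcut. -/
def IsShortcut {n : ℕ} (l : ℕ) (S : Finset (Sym2 (ZMod n))) : Prop :=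
  ∃ i₁ i₂ i₃ i₄ : ZMod n, IsShortcutTuple l i₁ i₂ i₃ i₄ ∧ S = shortcutEdges l i₁ i₂ i₃ i₄

/-- The number of `l`-shortcuts all of whose edges belong to the edge set `U`. -/
noncomputable def shortcutCountIn {n : ℕ} (l : ℕ) (U : Set (Sym2 (ZMod n))) : ℕ :=
  {S : Finset (Sym2 (ZMod n)) | IsShortcut l S ∧ (S : Set (Sym2 (ZMod n))) ⊆ U}.ncard

/-- `G` contains an `l`-shortcut. -/
def ContainsShortcut {n : ℕ} (l : ℕ) (G : SimpleGraph (ZMod n)) : Prop :=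
  ∃ i₁ i₂ i₃ i₄ : ZMod n, IsShortcutTuple l i₁ i₂ i₃ i₄ ∧
    (shortcutEdges l i₁ i₂ i₃ i₄ : Set (Sym2 (ZMod n))) ⊆ G.edgeSet

/-- `G` contains a cycle of length `t`. -/
def HasCycleLength {V : Type} (G : SimpleGraph V) (t : ℕ) : Prop :=
  ∃ (v : V) (w : G.Walk v v), w.IsCycle ∧ w.length = t

/-- The edge set of the complete graph on `ZMod n` (the vertex set of the
hypergraph `H_n^l`). -/
def knEdges (n : ℕ) : Set (Sym2 (ZMod n)) := {e | ¬ e.IsDiag}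

section Counting

open Finset

lemma card_mul_le_card_filter_prod {α β : Type*} [Fintype α] [Fintype β] (R : α → β → Prop)
    [∀ a, DecidablePred (R a)] {A : Finset α} {m : ℕ} (h : ∀ a ∈ A, m ≤ #{b | R a b}) :
    #A * m ≤ #{x : α × β | R x.1 x.2} := by
  calc #A * m ≤ ∑ a ∈ A, #{b | R a b} := card_nsmul_le_sum A _ m h
    _ ≤ ∑ a, #{b | R a b} := sum_le_univ_sum_of_nonneg fun _ => Nat.zero_le _
    _ = #{x : α × β | R x.1 x.2} := by simp only [card_filter, Fintype.sum_prod_type]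

lemma card_add_card_le_card_filter {G : Type*} [AddGroup G] [Fintype G] [DecidableEq G]
    (A B : Finset G) (s : G) (P : G → Prop) [DecidablePred P] :
    #A + #B ≤ Fintype.card G + #{x | ¬ P x} + #{x ∈ A | x + s ∈ B ∧ P x} := by
  have hB : #B ≤ #{x | x + s ∈ B} := by
    refine card_le_card_of_injOn (· - s) (fun b hb => ?_) sub_left_injective.injOn
    simpa using hb
  set C : Finset G := {x | x + s ∈ B}
  have hAC := card_union_add_card_inter A C
  have hunion := card_le_univ (A ∪ C)
  have hP : #(A ∩ C) ≤ #{x ∈ A | x + s ∈ B ∧ P x} + #{x | ¬ P x} := by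
    refine (card_le_card fun x hx => ?_).trans (card_union_le _ _)
    simp only [C, mem_union, mem_inter, mem_filter, mem_univ, true_and] at hx ⊢
    tauto
  omega

lemma card_sq_le_two_mul_card_filter_add {α : Type*} {f : α → ℕ} (hf : Function.Injective f)
    (T : Finset α) (k : ℕ) :
    #T * #T ≤ 2 * #{x ∈ T ×ˢ T | f x.1 + k ≤ f x.2} + (2 * k - 1) * #T := by
  set F : Finset (α × α) := {x ∈ T ×ˢ T | f x.1 + k ≤ f x.2}
  set F' : Finset (α × α) := {x ∈ T ×ˢ T | f x.2 + k ≤ f x.1}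
  set N : Finset (α × α) := {x ∈ T ×ˢ T | f x.1 < f x.2 + k ∧ f x.2 < f x.1 + k}
  have hswap : #F' = #F := by
    refine card_bij' (fun x _ => x.swap) (fun x _ => x.swap) ?_ ?_ ?_ ?_ <;>
      simp +contextual [F, F']
  have hnear : #N ≤ (2 * k - 1) * #T := by
    refine (card_le_mul_card_image (f := Prod.fst) N (2 * k - 1) fun a _ => ?_).trans ?_
    · calc _ ≤ #(Ico (f a + 1 - k) (f a + k)) := by
            refine card_le_card_of_injOn (fun x => f x.2) (fun x hx => ?_) (fun x hx y hy h => ?_)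
            · simp only [N, coe_filter, mem_filter, Set.mem_ofPred_eq] at hx
              simp only [coe_Ico, Set.mem_Ico, ← hx.2]
              omega
            · exact Prod.ext ((mem_filter.mp hx).2.trans (mem_filter.mp hy).2.symm) (hf h)
        _ ≤ 2 * k - 1 := by rw [Nat.card_Ico]; omega
    · refine Nat.mul_le_mul_left _ (card_le_card (image_subset_iff.mpr fun x hx => ?_))
      exact (mem_product.mp (mem_filter.mp hx).1).1
  calc #T * #T = #(T ×ˢ T) := (card_product T T).symm
    _ ≤ #(F ∪ F' ∪ N) := by
        refine card_le_card fun x hx => ?_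
        simp only [F, F', N, mem_union, mem_filter, hx, true_and]
        omega
    _ ≤ #F + #F' + #N := (card_union_le _ _).trans (Nat.add_le_add_right (card_union_le _ _) _)
    _ ≤ 2 * #F + (2 * k - 1) * #T := by omega

lemma sum_le_card_mul_add_card_filter_mul {α R : Type*} [Ring R] [LinearOrder R]
    [IsStrictOrderedRing R] (s : Finset α) (f : α → R) {M : R} (hM : ∀ i ∈ s, f i ≤ M) (t : R) :
    ∑ i ∈ s, f i ≤ #s * t + #{i ∈ s | t ≤ f i} * (M - t) := by
  calc ∑ i ∈ s, f i ≤ ∑ i ∈ s, (t + if t ≤ f i then M - t else 0) := by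
        refine sum_le_sum fun i hi => ?_
        split_ifs with h
        · exact (hM i hi).trans_eq (add_sub_cancel t M).symm
        · exact (not_le.mp h).le.trans_eq (add_zero t).symm
    _ = #s * t + #{i ∈ s | t ≤ f i} * (M - t) := by
        rw [sum_add_distrib, sum_const, nsmul_eq_mul, ← sum_filter, sum_const, nsmul_eq_mul]

lemma exists_subset_abs_sub_lt {α K : Type*} [Field K] [LinearOrder K] [IsStrictOrderedRing K]
    [FloorRing K] (S : Finset α) (f : α → K) {a c : K} {k : ℕ} (hc : 0 < c) (hk : 0 < k)
    (hf : ∀ i ∈ S, f i ∈ Set.Ico a (a + k * c)) :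
    ∃ T ⊆ S, (#S : K) / k ≤ #T ∧ ∀ i ∈ T, ∀ j ∈ T, |f i - f j| < c := by
  let cell (i : α) : ℤ := ⌊(f i - a) / c⌋
  have hcell : ∀ i ∈ S, cell i ∈ Ico (0 : ℤ) k := fun i hi => by
    obtain ⟨hlo, hhi⟩ := hf i hi
    rw [mem_Ico, Int.le_floor, Int.floor_lt, le_div_iff₀ hc, div_lt_iff₀ hc]
    push_cast
    constructor <;> linarith
  obtain ⟨z, -, hz⟩ := exists_le_card_fiber_of_nsmul_le_card_of_maps_to (b := (#S : K) / k) hcell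
    ⟨0, by simpa using hk⟩ (by
      rw [Int.card_Ico, sub_zero, Int.toNat_natCast, nsmul_eq_mul, mul_div_cancel₀]
      positivity)
  refine ⟨{i ∈ S | cell i = z}, filter_subset _ _, hz, fun i hi j hj => ?_⟩
  have hij := Int.abs_sub_lt_one_of_floor_eq_floor
    ((mem_filter.mp hi).2.trans (mem_filter.mp hj).2.symm)
  rwa [← sub_div, sub_sub_sub_cancel_right, abs_div, abs_of_pos hc, div_lt_one hc] at hij

lemma exists_natCast_mul_mem_Icc {K : Type*} [Field K] [LinearOrder K] [IsStrictOrderedRing K]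
    [FloorSemiring K] {a x : K} (hx₀ : 0 < x) (hx : x ≤ 1) (ha : 0 < a) :
    ∃ k : ℕ, 0 < k ∧ k * x ∈ Set.Icc a (a + 1) := by
  refine ⟨⌈a / x⌉₊, Nat.ceil_pos.mpr (div_pos ha hx₀), ?_, ?_⟩
  · exact (div_le_iff₀ hx₀).mp (Nat.le_ceil _)
  · have hceil := mul_le_mul_of_nonneg_right (Nat.ceil_lt_add_one (div_nonneg ha.le hx₀.le)).le
      hx₀.le
    rw [add_mul, div_mul_cancel₀ a hx₀.ne'] at hceil
    linarith

end Counting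

section ClockwiseOffsets

variable {n : ℕ}

lemma arcDist_add_natCast (a : ZMod n) {x y : ℕ} (hxy : x ≤ y) (hy : y < n) :
    arcDist (a + (x : ZMod n)) (a + (y : ZMod n)) = y - x := by
  rw [arcDist, add_sub_add_left_eq_sub, ← Nat.cast_sub hxy, ZMod.val_cast_of_lt (by omega)]

lemma arcDist_add_natCast_of_gt (a : ZMod n) {x y : ℕ} (hyx : y < x) (hx : x < n) :
    arcDist (a + (x : ZMod n)) (a + (y : ZMod n)) = n + y - x := by
  have hsub : (y : ZMod n) - x = ((n + y - x : ℕ) : ZMod n) := by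
    rw [Nat.cast_sub (by omega)]; simp
  rw [arcDist, add_sub_add_left_eq_sub, hsub, ZMod.val_cast_of_lt (by omega)]

/-- The arcs telescope from `y` to the largest offset, and the last one returns to `z` through the
wrap-around. -/
lemma sum_arcDist_zip_add (a : ZMod n) {y z : ℕ} {L : List ℕ} (hzy : z < y)
    (hL : (y :: L).IsChain (· < ·)) (hn : ∀ x ∈ y :: L, x < n) :
    ((((y :: L).map fun k : ℕ => a + (k : ZMod n)).zip
      ((L ++ [z]).map fun k : ℕ => a + (k : ZMod n))).map fun q => arcDist q.1 q.2).sum + y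
        = n + z := by
  induction L generalizing y with
  | nil =>
    have hy : y < n := hn y (by simp)
    simp only [List.map_cons, List.map_nil, List.nil_append, List.zip_cons_cons, List.zip_nil_left,
      List.sum_cons, List.sum_nil, arcDist_add_natCast_of_gt a hzy hy]
    omega
  | cons x L ih =>
    obtain ⟨hyx, hL⟩ := List.isChain_cons_cons.mp hL
    have hx : x < n := hn x (by simp)
    have hsum := ih (hzy.trans hyx) hL fun w hw => hn w (.tail _ hw)
    simp only [List.map_cons, List.cons_append, List.zip_cons_cons, List.sum_cons,
      arcDist_add_natCast a hyx.le hx] at hsum ⊢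
    omega

lemma add_natCast_arcDist [NeZero n] (a b : ZMod n) : a + (arcDist a b : ZMod n) = b := by
  rw [arcDist, ZMod.natCast_zmod_val, add_sub_cancel]

lemma arcDist_left_injective [NeZero n] (a : ZMod n) : Function.Injective (arcDist a) :=
  fun _ _ h => sub_left_injective (ZMod.val_injective n h)

lemma inClockwiseOrder_map_add (a : ZMod n) {L : List ℕ} (hlen : 2 ≤ L.length)
    (hL : L.IsChain (· < ·)) (hn : ∀ x ∈ L, x < n) :
    InClockwiseOrder (L.map fun k : ℕ => a + (k : ZMod n)) := by
  constructor
  · refine List.Nodup.map_on (fun x hx y hy h => ?_) (hL.pairwise.imp ne_of_lt)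
    rw [add_right_inj, ZMod.natCast_eq_natCast_iff', Nat.mod_eq_of_lt (hn x hx),
      Nat.mod_eq_of_lt (hn y hy)] at h
    exact h
  · match L, hlen with
    | x :: y :: L, _ =>
      obtain ⟨hxy, hyL⟩ := List.isChain_cons_cons.mp hL
      have hy : y < n := hn y (by simp)
      have hsum := sum_arcDist_zip_add a hxy hyL fun w hw => hn w (.tail _ hw)
      simp only [List.map_cons, List.map_append, List.map_nil, List.rotate_cons_succ,
        List.rotate_zero, List.cons_append, List.zip_cons_cons, List.sum_cons,
        arcDist_add_natCast a hxy.le hy] at hsum ⊢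
      omega

lemma not_mem_edgeSet_cycleGraph {u v : ZMod n} (huv : 2 ≤ arcDist u v)
    (hvu : 2 ≤ arcDist v u) : s(u, v) ∉ (cycleGraph n).edgeSet := by
  have arcDist_succ (i : ZMod n) : arcDist i (i + 1) ≤ 1 := by
    rw [arcDist, add_sub_cancel_left, ZMod.val_one_eq_one_mod]
    exact Nat.mod_le 1 n
  rw [cycleGraph, SimpleGraph.edgeSet_fromEdgeSet]
  rintro ⟨⟨i, hi⟩, -⟩
  have := arcDist_succ i
  rcases Sym2.eq_iff.mp hi with ⟨rfl, rfl⟩ | ⟨rfl, rfl⟩ <;> omega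

lemma not_mem_edgeSet_cycleGraph_add (a : ZMod n) {x y : ℕ} (hxy : x + 2 ≤ y)
    (hyx : y + 2 ≤ n + x) (hy : y < n) :
    s(a + (x : ZMod n), a + (y : ZMod n)) ∉ (cycleGraph n).edgeSet := by
  apply not_mem_edgeSet_cycleGraph
  · rw [arcDist_add_natCast a (by omega) hy]
    omega
  · rw [arcDist_add_natCast_of_gt a (by omega) hy]
    omega

lemma isShortcutTuple_of_arcDist [NeZero n] {l : ℕ} {i₁ i₂ i₃ i₄ : ZMod n}
    (h₂ : 2 ≤ arcDist i₁ i₂) (h₂₃ : arcDist i₁ i₂ + 3 ≤ arcDist i₁ i₃)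
    (h₃ : arcDist i₁ i₃ + 3 ≤ n)
    (h₂₄ : arcDist i₁ i₂ + 3 ≤ arcDist i₁ i₄) (h₄ : arcDist i₁ i₄ + l + 3 ≤ n)
    (h₃₄ : arcDist i₁ i₃ + 2 ≤ arcDist i₁ i₄ ∨ arcDist i₁ i₄ + l + 2 ≤ arcDist i₁ i₃) :
    IsShortcutTuple l i₁ i₂ i₃ i₄ := by
  have e₂ := add_natCast_arcDist i₁ i₂
  have e₃ := add_natCast_arcDist i₁ i₃
  have e₄ := add_natCast_arcDist i₁ i₄
  generalize arcDist i₁ i₂ = p at *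
  generalize arcDist i₁ i₃ = q at *
  generalize arcDist i₁ i₄ = r at *
  subst e₂ e₃ e₄
  constructor
  · refine h₃₄.imp (fun h => ?_) (fun h => ?_)
    · have hL : [0, 1, p, p + 1, q, q + 1, r, r + l + 1].IsChain (· < ·) := by
        simp only [List.isChain_cons_cons, List.isChain_singleton, and_true]
        omega
      have hn : ∀ x ∈ [0, 1, p, p + 1, q, q + 1, r, r + l + 1], x < n := by
        simp only [List.forall_mem_cons, List.not_mem_nil, false_imp_iff, implies_true, and_true]
        omega
      simpa [add_assoc] using inClockwiseOrder_map_add i₁ (by simp) hL hn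
    · have hL : [0, 1, p, p + 1, r, r + l + 1, q, q + 1].IsChain (· < ·) := by
        simp only [List.isChain_cons_cons, List.isChain_singleton, and_true]
        omega
      have hn : ∀ x ∈ [0, 1, p, p + 1, r, r + l + 1, q, q + 1], x < n := by
        simp only [List.forall_mem_cons, List.not_mem_nil, false_imp_iff, implies_true, and_true]
        omega
      simpa [add_assoc] using inClockwiseOrder_map_add i₁ (by simp) hL hn
  · have not_mem {x y : ℕ} := not_mem_edgeSet_cycleGraph_add i₁ (x := x) (y := y)
    have h₁₃ := not_mem (x := 0) (y := q) (by omega) (by omega) (by omega)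
    have h₁₄ := not_mem (x := 1) (y := r) (by omega) (by omega) (by omega)
    have h₂₄ := not_mem (x := p) (y := r + l + 1) (by omega) (by omega) (by omega)
    have h₂₃ := not_mem (x := p + 1) (y := q + 1) (by omega) (by omega) (by omega)
    push_cast [← add_assoc, add_zero] at h₁₃ h₁₄ h₂₄ h₂₃
    simpa only [shortcutEdges, Finset.forall_mem_insert, Finset.mem_singleton, forall_eq] using
      ⟨h₁₃, h₁₄, h₂₄, h₂₃⟩

end ClockwiseOffsets

section Tuples

open Finset

lemma card_biUnion_toFinset_shortcutEdges_le {n : ℕ} (l : ℕ) (i₁ i₂ i₃ i₄ : ZMod n) :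
    #((shortcutEdges l i₁ i₂ i₃ i₄).biUnion Sym2.toFinset) ≤ 8 := by
  have hedge : ∀ e ∈ shortcutEdges l i₁ i₂ i₃ i₄, #e.toFinset ≤ 2 := fun e _ => by
    rw [Sym2.card_toFinset]
    split_ifs <;> norm_num
  calc _ ≤ #(shortcutEdges l i₁ i₂ i₃ i₄) * 2 := card_biUnion_le_card_mul _ _ _ hedge
    _ ≤ 4 * 2 := Nat.mul_le_mul_right 2 card_le_four

variable {n : ℕ} [NeZero n]

/-- The pairs `(i₃, i₄)` that complete a given pair `x = (i₁, i₂)` to a quadruple determining an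
`l`-shortcut with all edges in `U`. -/
noncomputable def shortcutExtensions (l : ℕ) (U : Set (Sym2 (ZMod n))) (x : ZMod n × ZMod n) :
    Finset (ZMod n × ZMod n) :=
  {y | IsShortcutTuple l x.1 x.2 y.1 y.2 ∧
    (shortcutEdges l x.1 x.2 y.1 y.2 : Set (Sym2 (ZMod n))) ⊆ U}

/-- The quadruples `((i₁, i₂), (i₃, i₄))` determining an `l`-shortcut with all edges in `U`. They
are grouped into pairs because `(i₃, i₄)` is chosen after `(i₁, i₂)`. -/
noncomputable def shortcutTuples (l : ℕ) (U : Set (Sym2 (ZMod n))) :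
    Finset ((ZMod n × ZMod n) × (ZMod n × ZMod n)) :=
  {t | t.2 ∈ shortcutExtensions l U t.1}

lemma shortcutCountIn_eq_card_image (l : ℕ) (U : Set (Sym2 (ZMod n))) :
    shortcutCountIn l U =
      #((shortcutTuples l U).image fun t => shortcutEdges l t.1.1 t.1.2 t.2.1 t.2.2) := by
  rw [shortcutCountIn, ← Set.ncard_coe_finset]
  congr 1
  ext S
  simp only [IsShortcut, shortcutTuples, shortcutExtensions, Set.mem_ofPred_eq, mem_coe, mem_image,
    mem_filter_univ, Prod.exists]
  constructor
  · rintro ⟨⟨i₁, i₂, i₃, i₄, h, rfl⟩, hS⟩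
    exact ⟨i₁, i₂, i₃, i₄, ⟨h, hS⟩, rfl⟩
  · rintro ⟨i₁, i₂, i₃, i₄, ⟨h, hS⟩, rfl⟩
    exact ⟨⟨i₁, i₂, i₃, i₄, h, rfl⟩, hS⟩

lemma shortcutCountIn_le (l : ℕ) (U : Set (Sym2 (ZMod n))) : shortcutCountIn l U ≤ n ^ 4 := by
  rw [shortcutCountIn_eq_card_image]
  calc _ ≤ #(shortcutTuples l U) := card_image_le
    _ ≤ Fintype.card ((ZMod n × ZMod n) × (ZMod n × ZMod n)) := card_le_univ _
    _ = n ^ 4 := by simp only [Fintype.card_prod, ZMod.card]; ring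

/-- Each of the four entries of a quadruple is one of the at most eight vertices spanned by its
edges. -/
lemma card_shortcutTuples_le (l : ℕ) (U : Set (Sym2 (ZMod n))) :
    #(shortcutTuples l U) ≤ 8 ^ 4 * shortcutCountIn l U := by
  rw [shortcutCountIn_eq_card_image]
  refine card_le_mul_card_image _ _ fun S hS => ?_
  have hV : #(S.biUnion Sym2.toFinset) ≤ 8 := by
    obtain ⟨t, -, rfl⟩ := mem_image.mp hS
    exact card_biUnion_toFinset_shortcutEdges_le l _ _ _ _
  set V := S.biUnion Sym2.toFinset with hV_def
  calc _ ≤ #((V ×ˢ V) ×ˢ (V ×ˢ V)) := by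
        refine card_le_card fun ⟨⟨i₁, i₂⟩, i₃, i₄⟩ ht => ?_
        have hSt : shortcutEdges l i₁ i₂ i₃ i₄ = S := (mem_filter.mp ht).2
        have mem_V {u v : ZMod n} (h : s(u, v) ∈ shortcutEdges l i₁ i₂ i₃ i₄) : u ∈ V ∧ v ∈ V := by
          simp only [hV_def, ← hSt, mem_biUnion, Sym2.mem_toFinset]
          exact ⟨⟨_, h, Sym2.mem_mk_left u v⟩, ⟨_, h, Sym2.mem_mk_right u v⟩⟩
        have h₁₃ := @mem_V i₁ i₃ (by simp [shortcutEdges])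
        have h₁₄ := @mem_V (i₁ + 1) i₄ (by simp [shortcutEdges])
        have h₂₄ := @mem_V i₂ (i₄ + (l : ZMod n) + 1) (by simp [shortcutEdges])
        simp only [mem_product]
        exact ⟨⟨h₁₃.1, h₂₄.1⟩, h₁₃.2, h₁₄.2⟩
    _ = #V ^ 4 := by simp only [card_product]; ring
    _ ≤ 8 ^ 4 := Nat.pow_le_pow_left hV 4

end Tuples

section Extensions

open Finset

variable {n : ℕ} [NeZero n]

lemma card_add_card_le_card_filter_arcDist (A B : Finset (ZMod n)) (a s : ZMod n) (P : ℕ → Prop)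
    [DecidablePred P] {S : Finset ℕ} (hS : ∀ x < n, ¬ P x → x ∈ S) :
    #A + #B ≤ n + #S + #{x ∈ A | x + s ∈ B ∧ P (arcDist a x)} := by
  have hbad : #{x | ¬ P (arcDist a x)} ≤ #S :=
    card_le_card_of_injOn (arcDist a) (fun _ hx => hS _ (ZMod.val_lt _) (mem_filter.mp hx).2)
      (arcDist_left_injective a).injOn
  have hcount := card_add_card_le_card_filter A B s fun x => P (arcDist a x)
  rw [ZMod.card] at hcount
  omega

lemma le_card_third_vertex (G : SimpleGraph (ZMod n)) (a u v : ZMod n) {p Y : ℕ}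
    (hdeg : n + Y + p + 5 ≤ G.degree u + G.degree v) :
    Y ≤ #{x ∈ G.neighborFinset u | x + 1 ∈ G.neighborFinset v ∧
      (p + 3 ≤ arcDist a x ∧ arcDist a x + 3 ≤ n)} := by
  have hcount := card_add_card_le_card_filter_arcDist (G.neighborFinset u) (G.neighborFinset v)
    a 1 (fun x => p + 3 ≤ x ∧ x + 3 ≤ n) (S := range (p + 3) ∪ Ico (n - 2) n)
    fun x hx hP => by
      rw [mem_union, mem_range, mem_Ico]
      omega
  have hS := card_union_le (range (p + 3)) (Ico (n - 2) n)
  rw [card_range, Nat.card_Ico] at hS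
  rw [G.card_neighborFinset_eq_degree, G.card_neighborFinset_eq_degree] at hcount
  omega

lemma le_card_fourth_vertex (G : SimpleGraph (ZMod n)) (a u v : ZMod n) {l p q Y : ℕ}
    (hdeg : n + Y + p + 2 * l + 8 ≤ G.degree u + G.degree v) :
    Y ≤ #{x ∈ G.neighborFinset u | x + ((l : ZMod n) + 1) ∈ G.neighborFinset v ∧
      (p + 3 ≤ arcDist a x ∧ arcDist a x + l + 3 ≤ n ∧
        (q + 2 ≤ arcDist a x ∨ arcDist a x + l + 2 ≤ q))} := by
  have hcount := card_add_card_le_card_filter_arcDist (G.neighborFinset u) (G.neighborFinset v)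
    a (l + 1) (fun x => p + 3 ≤ x ∧ x + l + 3 ≤ n ∧ (q + 2 ≤ x ∨ x + l + 2 ≤ q))
    (S := range (p + 3) ∪ Ico (n - (l + 2)) n ∪ Ico (q - (l + 1)) (q + 2)) fun x hx hP => by
      rw [mem_union, mem_union, mem_range, mem_Ico, mem_Ico]
      omega
  have hS := card_union_le (range (p + 3) ∪ Ico (n - (l + 2)) n) (Ico (q - (l + 1)) (q + 2))
  have hS_ends := card_union_le (range (p + 3)) (Ico (n - (l + 2)) n)
  rw [card_range, Nat.card_Ico] at hS_ends
  rw [Nat.card_Ico] at hS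
  rw [G.card_neighborFinset_eq_degree, G.card_neighborFinset_eq_degree] at hcount
  omega

lemma mul_self_le_card_shortcutExtensions (G : SimpleGraph (ZMod n)) {l Y : ℕ} {i₁ i₂ : ZMod n}
    (h₁₂ : 2 ≤ arcDist i₁ i₂)
    (h₃ : n + Y + arcDist i₁ i₂ + 5 ≤ G.degree i₁ + G.degree (i₂ + 1))
    (h₄ : n + Y + arcDist i₁ i₂ + 2 * l + 8 ≤ G.degree (i₁ + 1) + G.degree i₂) :
    Y * Y ≤ #(shortcutExtensions l G.edgeSet (i₁, i₂)) := by
  refine (Nat.mul_le_mul_right Y (le_card_third_vertex G i₁ i₁ (i₂ + 1) h₃)).trans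
    (card_mul_le_card_filter_prod (fun i₃ i₄ => IsShortcutTuple l i₁ i₂ i₃ i₄ ∧
      (shortcutEdges l i₁ i₂ i₃ i₄ : Set (Sym2 (ZMod n))) ⊆ G.edgeSet) fun i₃ hi₃ => ?_)
  refine (le_card_fourth_vertex G i₁ (i₁ + 1) i₂ (q := arcDist i₁ i₃) h₄).trans
    (card_le_card fun i₄ hi₄ => ?_)
  rw [mem_filter, G.mem_neighborFinset, G.mem_neighborFinset] at hi₃ hi₄
  obtain ⟨adj₁₃, adj₂₃, hlo₃, hhi₃⟩ := hi₃
  obtain ⟨adj₁₄, adj₂₄, hlo₄, hhi₄, hsep⟩ := hi₄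
  rw [← add_assoc] at adj₂₄
  refine (mem_filter_univ _).mpr
    ⟨isShortcutTuple_of_arcDist h₁₂ hlo₃ hhi₃ hlo₄ hhi₄ hsep, ?_⟩
  simp only [shortcutEdges, coe_insert, coe_singleton, Set.insert_subset_iff,
    Set.singleton_subset_iff, SimpleGraph.mem_edgeSet]
  exact ⟨adj₁₃, adj₁₄, adj₂₄, adj₂₃⟩

end Extensions

section CrossPairs

open Finset

variable {n : ℕ} [NeZero n] {d : ZMod n → ℝ} {ε : ℝ}

/-- The pairs `(i₁, i₂)` at clockwise distance between `2` and `ε n / 4` such that, for a degree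
function `d`, both `d i₁ + d (i₂ + 1)` and `d (i₁ + 1) + d i₂` are at least `(1 + 3 ε / 4) n`. -/
noncomputable def crossPairs (d : ZMod n → ℝ) (ε : ℝ) : Finset (ZMod n × ZMod n) :=
  {x | (2 ≤ arcDist x.1 x.2 ∧ (arcDist x.1 x.2 : ℝ) ≤ ε / 4 * n) ∧
    (1 + 3 * ε / 4) * n ≤ d x.1 + d (x.2 + 1) ∧ (1 + 3 * ε / 4) * n ≤ d (x.1 + 1) + d x.2}

lemma le_card_filter_le_add_succ (hε₀ : 0 ≤ ε) (hε : ε ≤ 1 / 2) (hd : ∀ i, d i ≤ n)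
    (hsum : (1 / 2 + ε) * (n * (n - 1)) ≤ ∑ i, d i) :
    ε * n - 2 ≤ #{i | (1 + ε) * n ≤ d i + d (i + 1)} := by
  have hn : (0 : ℝ) < n := Nat.cast_pos.mpr (NeZero.pos n)
  have hsum_pairs : ∑ i, (d i + d (i + 1)) = 2 * ∑ i, d i := by
    have hshift : ∑ i, d (i + 1) = ∑ i, d i := Equiv.sum_comp (Equiv.addRight (1 : ZMod n)) d
    rw [sum_add_distrib, hshift, two_mul]
  have hmarkov := sum_le_card_mul_add_card_filter_mul univ (fun i => d i + d (i + 1))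
    (M := 2 * n) (fun i _ => by linarith [hd i, hd (i + 1)]) ((1 + ε) * n)
  rw [hsum_pairs, card_univ, ZMod.card] at hmarkov
  set N : ℝ := ((#{i | (1 + ε) * n ≤ d i + d (i + 1)} : ℕ) : ℝ)
  have hN : 0 ≤ ε * N := mul_nonneg hε₀ (Nat.cast_nonneg _)
  have hdiv : (1 + 2 * ε) * (n - 1) ≤ (1 + ε) * n + N * (1 - ε) :=
    le_of_mul_le_mul_left (by linarith) hn
  linarith

lemma exists_subset_abs_sub_val_lt_abs_sub_lt (S : Finset (ZMod n)) (hε₀ : 0 < ε) (hε : ε ≤ 1)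
    {g : ZMod n → ℝ} (hg : ∀ i, g i ∈ Set.Ico (-n : ℝ) n) :
    ∃ T ⊆ S, ε ^ 2 / 25 * #S ≤ #T ∧ ∀ i ∈ T, ∀ j ∈ T,
      |(i.val - j.val : ℝ)| < ε / 4 * n ∧ |g i - g j| < ε / 2 * n := by
  have hn : (0 : ℝ) < n := Nat.cast_pos.mpr (NeZero.pos n)
  obtain ⟨k, hk_pos, hk_ge, hk_le⟩ := exists_natCast_mul_mem_Icc hε₀ hε four_pos
  have hkR : (0 : ℝ) < k := Nat.cast_pos.mpr hk_pos
  have hwidth : n / k ≤ ε / 4 * n := by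
    rw [div_le_iff₀ hkR]
    nlinarith
  have hfrac : ε ^ 2 / 25 ≤ 1 / (k : ℝ) ^ 2 := by
    rw [div_le_div_iff₀ (by norm_num) (by positivity), ← mul_pow]
    nlinarith
  obtain ⟨T₁, hT₁, hcard₁, hval⟩ := exists_subset_abs_sub_lt S (fun i => (i.val : ℝ)) (a := 0)
    (c := n / k) (by positivity) hk_pos fun i _ => by
      rw [mul_div_cancel₀ _ hkR.ne', zero_add]
      exact ⟨Nat.cast_nonneg _, Nat.cast_lt.mpr i.val_lt⟩
  obtain ⟨T, hT, hcard, hdiff⟩ := exists_subset_abs_sub_lt T₁ g (a := -n)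
    (c := 2 * (n / k)) (by positivity) hk_pos fun i _ => by
      have hend : -n + k * (2 * (n / k)) = (n : ℝ) := by field_simp; ring
      rw [hend]
      exact hg i
  refine ⟨T, hT.trans hT₁, ?_, fun i hi j hj => ⟨?_, ?_⟩⟩
  · calc ε ^ 2 / 25 * (#S : ℝ) ≤ 1 / (k : ℝ) ^ 2 * #S :=
          mul_le_mul_of_nonneg_right hfrac (Nat.cast_nonneg _)
      _ = (#S : ℝ) / k / k := by field_simp
      _ ≤ (#T₁ : ℝ) / k := by gcongr
      _ ≤ (#T : ℝ) := hcard
  · exact (hval i (hT hi) j (hT hj)).trans_le hwidth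
  · exact (hdiff i hi j hj).trans_le (by linarith)

/-- Twice each crossed sum `d i + d (j + 1)`, `d (i + 1) + d j` is the sum of the two consecutive
sums `d i + d (i + 1)`, `d j + d (j + 1)` plus or minus the difference of the consecutive
differences, so both are large when the latter are close. -/
lemma mem_crossPairs_of_abs_sub_lt {i j : ZMod n} (hij : i.val + 2 ≤ j.val)
    (hval : |(i.val - j.val : ℝ)| < ε / 4 * n)
    (hdiff : |(d i - d (i + 1)) - (d j - d (j + 1))| < ε / 2 * n)
    (hi : (1 + ε) * n ≤ d i + d (i + 1)) (hj : (1 + ε) * n ≤ d j + d (j + 1)) :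
    (i, j) ∈ crossPairs d ε := by
  have harc : arcDist i j = j.val - i.val := ZMod.val_sub (by omega)
  have harcR : (arcDist i j : ℝ) = j.val - i.val := by rw [harc, Nat.cast_sub (by omega)]
  rw [abs_lt] at hval hdiff
  refine (mem_filter_univ _).mpr ⟨⟨?_, ?_⟩, ?_, ?_⟩
  · exact harc ▸ by omega
  · linarith
  · linarith
  · linarith

lemma le_card_crossPairs (hε₀ : 0 < ε) (hε : ε ≤ 1 / 2) (hn : 1000 ≤ ε ^ 3 * n)
    (hd₀ : ∀ i, 0 ≤ d i) (hd : ∀ i, d i < n) (hsum : (1 / 2 + ε) * (n * (n - 1)) ≤ ∑ i, d i) :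
    ε ^ 6 * n ^ 2 / 7500 ≤ #(crossPairs d ε) := by
  have hheavy := le_card_filter_le_add_succ hε₀.le hε (fun i => (hd i).le) hsum
  obtain ⟨T, hT, hcard, hclose⟩ := exists_subset_abs_sub_val_lt_abs_sub_lt
    {i | (1 + ε) * n ≤ d i + d (i + 1)} hε₀ (by linarith) (g := fun i => d i - d (i + 1))
    fun i => ⟨by linarith [hd₀ i, hd (i + 1)], by linarith [hd i, hd₀ (i + 1)]⟩
  have hpairs : #{x ∈ T ×ˢ T | x.1.val + 2 ≤ x.2.val} ≤ #(crossPairs d ε) :=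
    card_le_card fun x hx => by
      obtain ⟨hxT, hx⟩ := mem_filter.mp hx
      obtain ⟨h₁, h₂⟩ := mem_product.mp hxT
      obtain ⟨hval, hdiff⟩ := hclose _ h₁ _ h₂
      exact mem_crossPairs_of_abs_sub_lt hx hval hdiff (mem_filter.mp (hT h₁)).2
        (mem_filter.mp (hT h₂)).2
  have hsq : (#T : ℝ) * #T ≤ 2 * #(crossPairs d ε) + 3 * #T := by
    exact_mod_cast (card_sq_le_two_mul_card_filter_add (ZMod.val_injective n) T 2).trans (by omega)
  have hεn : 1000 ≤ ε * n := hn.trans (mul_le_mul_of_nonneg_right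
    (pow_le_of_le_one hε₀.le (by linarith) three_ne_zero) (Nat.cast_nonneg n))
  have hT_ge : ε ^ 3 * n / 50 ≤ #T := by
    calc ε ^ 3 * n / 50 = ε ^ 2 / 25 * (ε * n / 2) := by ring
      _ ≤ ε ^ 2 / 25 * (ε * n - 2) := by gcongr; linarith
      _ ≤ ε ^ 2 / 25 * #{i | (1 + ε) * n ≤ d i + d (i + 1)} := by gcongr
      _ ≤ #T := hcard
  calc ε ^ 6 * n ^ 2 / 7500 = (ε ^ 3 * n / 50) ^ 2 / 3 := by ring
    _ ≤ (#T : ℝ) ^ 2 / 3 := by gcongr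
    _ ≤ #(crossPairs d ε) := by nlinarith

lemma le_card_shortcutTuples {G : SimpleGraph (ZMod n)} {l : ℕ} (hε₀ : 0 < ε) (hε : ε ≤ 1 / 2)
    (hn : 1000 ≤ ε ^ 3 * n) (hl : l ≤ ε / 100 * n)
    (hG : (1 / 2 + ε) * (n * (n - 1)) ≤ ∑ i, (G.degree i : ℝ)) :
    ε ^ 8 * n ^ 4 / 2 ^ 20 ≤ #(shortcutTuples l G.edgeSet) := by
  obtain ⟨Y, hY⟩ : ∃ Y, Y = ⌈ε * n / 4⌉₊ := ⟨_, rfl⟩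
  have hY_ge : ε * n / 4 ≤ Y := hY ▸ Nat.le_ceil _
  have hY_lt : (Y : ℝ) < ε * n / 4 + 1 := hY ▸ Nat.ceil_lt_add_one (by positivity)
  have hεn : 1000 ≤ ε * n := hn.trans (mul_le_mul_of_nonneg_right
    (pow_le_of_le_one hε₀.le (by linarith) three_ne_zero) (Nat.cast_nonneg n))
  have hext : ∀ x ∈ crossPairs (fun i => (G.degree i : ℝ)) ε,
      Y * Y ≤ #(shortcutExtensions l G.edgeSet x) := fun x hx => by
    obtain ⟨⟨h₂, hle⟩, h₃, h₄⟩ := (mem_filter_univ _).mp hx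
    refine mul_self_le_card_shortcutExtensions G h₂ ?_ ?_ <;>
    · rw [← Nat.cast_le (α := ℝ)]
      push_cast
      linarith
  have htuples : #(crossPairs (fun i => (G.degree i : ℝ)) ε) * (Y * Y) ≤
      #(shortcutTuples l G.edgeSet) :=
    card_mul_le_card_filter_prod (fun x y => y ∈ shortcutExtensions l G.edgeSet x) fun x hx =>
      (hext x hx).trans (card_le_card fun y hy => (mem_filter_univ _).mpr hy)
  have hpairs := le_card_crossPairs hε₀ hε hn (d := fun i => (G.degree i : ℝ))
    (fun i => Nat.cast_nonneg _)
    (fun i => Nat.cast_lt.mpr ((G.degree_lt_card_verts i).trans_eq (ZMod.card n))) hG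
  calc ε ^ 8 * n ^ 4 / 2 ^ 20 ≤ ε ^ 8 * n ^ 4 / 120000 := by gcongr; norm_num
    _ = ε ^ 6 * n ^ 2 / 7500 * (ε * n / 4 * (ε * n / 4)) := by ring
    _ ≤ #(crossPairs (fun i => (G.degree i : ℝ)) ε) * (Y * Y) := by gcongr
    _ ≤ #(shortcutTuples l G.edgeSet) := by exact_mod_cast htuples

end CrossPairs

section EdgeSets

open Finset

variable {n : ℕ}

lemma edgeSet_fromEdgeSet_of_subset_knEdges {U : Set (Sym2 (ZMod n))} (hU : U ⊆ knEdges n) :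
    (SimpleGraph.fromEdgeSet U).edgeSet = U :=
  (SimpleGraph.edgeSet_eq_iff _ _).mpr ⟨rfl, Set.disjoint_left.mpr fun _ he => hU he⟩

variable [NeZero n] {U : Set (Sym2 (ZMod n))} {ε : ℝ}

lemma ncard_knEdges : ((knEdges n).ncard : ℝ) = n * (n - 1) / 2 := by
  have htop : knEdges n = (⊤ : SimpleGraph (ZMod n)).edgeSet := SimpleGraph.edgeSet_top.symm
  rw [htop, ← SimpleGraph.coe_edgeFinset, Set.ncard_coe_finset,
    SimpleGraph.card_edgeFinset_top_eq_card_choose_two, ZMod.card, Nat.cast_choose_two]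

lemma le_one_half_of_mul_ncard_knEdges_le (hn : 2 ≤ n) (hU : U ⊆ knEdges n)
    (hcard : (1 / 2 + ε) * (knEdges n).ncard ≤ U.ncard) : ε ≤ 1 / 2 := by
  have hn₂ : (2 : ℝ) ≤ n := Nat.ofNat_le_cast.mpr hn
  have hpos : (0 : ℝ) < (knEdges n).ncard := by
    rw [ncard_knEdges]
    nlinarith
  have hle : (U.ncard : ℝ) ≤ (knEdges n).ncard := Nat.cast_le.mpr (Set.ncard_le_ncard hU)
  have := le_of_mul_le_mul_right (hcard.trans (hle.trans_eq (one_mul _).symm)) hpos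
  linarith

lemma pow_mul_pow_le_shortcutCountIn {l : ℕ} (hn₂ : 2 ≤ n) (hε₀ : 0 < ε)
    (hn : 1000 ≤ ε ^ 3 * n) (hl : l ≤ ε / 100 * n) (hU : U ⊆ knEdges n)
    (hcard : (1 / 2 + ε) * (knEdges n).ncard ≤ U.ncard) :
    (ε / 16) ^ 8 * n ^ 4 ≤ shortcutCountIn l U := by
  have hε := le_one_half_of_mul_ncard_knEdges_le hn₂ hU hcard
  obtain ⟨G, rfl⟩ : ∃ G : SimpleGraph (ZMod n), G.edgeSet = U :=
    ⟨_, edgeSet_fromEdgeSet_of_subset_knEdges hU⟩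
  have hdeg : (1 / 2 + ε) * (n * (n - 1)) ≤ ∑ i, (G.degree i : ℝ) := by
    rw [← Nat.cast_sum, G.sum_degrees_eq_twice_card_edges, ← Set.ncard_coe_finset,
      SimpleGraph.coe_edgeFinset]
    rw [ncard_knEdges] at hcard
    push_cast
    linarith
  have htuples := le_card_shortcutTuples hε₀ hε hn hl hdeg
  have hfiber : (#(shortcutTuples l G.edgeSet) : ℝ) ≤ 8 ^ 4 * shortcutCountIn l G.edgeSet := by
    exact_mod_cast card_shortcutTuples_le l G.edgeSet
  linarith

end EdgeSets

/-- Density of the shortcut hypergraphs: for every ε₀ > 0 there exist δ > 0 and n₀ such that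
for all n ≥ n₀ and 0 ≤ l ≤ δn, the hypergraph `H_n^l` is (1/2, f, ε₀)-dense with
f(ε) = (ε/16)⁸: every `U ⊆ E(K_n)` with `|U| ≥ (1/2 + ε)|E(K_n)|` contains at least
`f(ε)` times the total number of `l`-shortcuts. -/
theorem shortcut_hypergraph_dense (ε₀ : ℝ) (hε₀ : 0 < ε₀) :
    ∃ δ : ℝ, 0 < δ ∧ ∃ n₀ : ℕ, ∀ n l : ℕ, n₀ ≤ n → (l : ℝ) ≤ δ * n →
      ∀ ε : ℝ, ε₀ ≤ ε → ∀ U : Set (Sym2 (ZMod n)), U ⊆ knEdges n →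
        (1/2 + ε) * ((knEdges n).ncard : ℝ) ≤ (U.ncard : ℝ) →
        (ε / 16)^8 * (shortcutCountIn l (knEdges n) : ℝ) ≤ (shortcutCountIn l U : ℝ) := by
  obtain ⟨n₀, hn₀⟩ := exists_nat_ge (1000 / ε₀ ^ 3)
  refine ⟨ε₀ / 100, by positivity, max 2 n₀, fun n l hn hl ε hε U hU hcard => ?_⟩
  have : NeZero n := ⟨by omega⟩
  have hlarge : 1000 ≤ ε ^ 3 * n := by
    calc (1000 : ℝ) ≤ n₀ * ε₀ ^ 3 := (div_le_iff₀ (by positivity)).mp hn₀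
      _ ≤ n * ε ^ 3 := by gcongr; exact (le_max_right _ _).trans hn
      _ = ε ^ 3 * n := mul_comm _ _
  have hupper : (shortcutCountIn l (knEdges n) : ℝ) ≤ n ^ 4 := by
    exact_mod_cast shortcutCountIn_le l (knEdges n)
  have hlower : (ε / 16) ^ 8 * n ^ 4 ≤ shortcutCountIn l U :=
    pow_mul_pow_le_shortcutCountIn ((le_max_left _ _).trans hn) (hε₀.trans_le hε) hlarge
      (hl.trans (by gcongr)) hU hcard
  exact (mul_le_mul_of_nonneg_left hupper (by positivity)).trans hlower
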